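/- arXiv:2404.06000 — 10 statements merged into one kernel-verified Lean document; each statement's English description precedes it below -/
import Mathlib

section
/- Let X and Y be locally compact Hausdorff spaces and let T : C₀(X,ℝ)⁺ → C₀(Y,ℝ)⁺ be a surjective phase-isometry. Then there exists a homeomorphism φ : Y → X such that T(f)(y) = f(φ(y)) for all f ∈ C₀(X,ℝ)⁺ and all y ∈ Y. -/
open scoped ZeroAtInfty

/-- The positive cone of `C₀(X, ℝ)`: all nonnegative functions. -/
def PosCone (X : Type*) [TopologicalSpace X] : Type _ :=
  {f : C₀(X, ℝ) // ∀ x, 0 ≤ f x}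

namespace PosCone

variable {X : Type*} [TopologicalSpace X]

/-- The underlying `C₀` function of an element of the positive cone. -/
noncomputable instance : CoeOut (PosCone X) C₀(X, ℝ) := ⟨Subtype.val⟩

/-- The zero function, as an element of the positive cone. -/
noncomputable instance : Zero (PosCone X) := ⟨⟨0, fun x => by simp⟩⟩

end PosCone

/-- The peak set `P_x`: all nonzero nonnegative functions attaining their norm at `x`. -/
def Peak {X : Type*} [TopologicalSpace X] (x : X) : Set (PosCone X) :=
  {f | (f : C₀(X, ℝ)) ≠ 0 ∧ (f : C₀(X, ℝ)) x = ‖(f : C₀(X, ℝ))‖}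

/-- `M(f)`: the set of points where `f` attains its norm. -/
def MaxSet {X : Type*} [TopologicalSpace X] (f : C₀(X, ℝ)) : Set X :=
  {x | f x = ‖f‖}

/-- The sum of finitely many elements of the positive cone. -/
noncomputable def sumCone {Y : Type*} [TopologicalSpace Y] {n : ℕ}
    (u : Fin n → PosCone Y) : PosCone Y :=
  ⟨∑ k, (u k : C₀(Y, ℝ)), fun y => by
    have h : (∑ k, (u k : C₀(Y, ℝ))) y = ∑ k, (u k : C₀(Y, ℝ)) y := by
      refine map_sum ((Pi.evalAddMonoidHom (fun _ : Y => ℝ) y).comp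
        ⟨⟨fun f : C₀(Y, ℝ) => ⇑f, ZeroAtInftyContinuousMap.coe_zero⟩,
          ZeroAtInftyContinuousMap.coe_add⟩) _ _
    rw [h]
    exact Finset.sum_nonneg fun k _ => (u k).2 y⟩

/-!
For nonnegative functions `‖f - g‖ ≤ ‖f + g‖`, so the larger element of each pair is the norm of
the sum, and a phase-isometry of positive cones preserves both `‖f + g‖` and `‖f - g‖`.
Taking `g = f` shows that it preserves norms.

Fix `x`. If `f` and `g` both peak at `x`, then so does `h = f + g`, and `‖h - f‖ = ‖g‖`.
At any `y` where `T h` peaks, `T f y ≥ T h y - ‖T h - T f‖ = ‖h‖ - ‖g‖ = ‖f‖ = ‖T f‖`, so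
`T f` peaks at `y`, and likewise `T g`. Hence the compact sets `MaxSet (T f)`, for `f ∈ Peak x`, are
directed downwards and have a common point `ψ x` (`exists_common_peak`).

Every `f` in the cone admits `k ∈ Peak x` with `f + k ∈ Peak x` (`exists_mem_peak_add`). As `T k`
and `T (f + k)` peak at `ψ x`, the norms of `T f + T k` and `T (f + k) - T f` bound `T f (ψ x)` from
above and below by `f x` (`exists_point_eval`). The same argument applied to the inverse of `T`
gives `φ : Y → X` with `f (φ y) = T f y`; since cone functions separate points and determine the
topology, `φ` and `ψ` are mutually inverse and continuous.
-/

namespace PosCone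

open Set Filter Topology

/-! ### Peaks and maximum sets -/

section Basic

variable {X : Type*} [TopologicalSpace X]

theorem apply_le_norm (f : C₀(X, ℝ)) (x : X) : f x ≤ ‖f‖ :=
  (le_abs_self _).trans (f.toBCF.norm_coe_le_norm x)

theorem norm_le_of_abs_le {f : C₀(X, ℝ)} {C : ℝ} (hC : 0 ≤ C) (h : ∀ x, |f x| ≤ C) : ‖f‖ ≤ C :=
  (BoundedContinuousFunction.norm_le (f := f.toBCF) hC).2 h

/-- The sum of two elements of the positive cone. -/
noncomputable def add (f g : PosCone X) : PosCone X :=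
  ⟨f.1 + g.1, fun x => add_nonneg (f.2 x) (g.2 x)⟩

theorem norm_sub_le_norm_add (f g : PosCone X) : ‖f.1 - g.1‖ ≤ ‖f.1 + g.1‖ := by
  refine norm_le_of_abs_le (norm_nonneg _) fun x => ?_
  have h := apply_le_norm (f.1 + g.1) x
  have hf := f.2 x
  have hg := g.2 x
  simp only [ZeroAtInftyContinuousMap.add_apply, ZeroAtInftyContinuousMap.sub_apply] at h ⊢
  rw [abs_le]
  constructor <;> linarith

theorem mem_peak_of_forall_le {f : PosCone X} {x : X} (hpos : 0 < f.1 x)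
    (h : ∀ z, f.1 z ≤ f.1 x) : f ∈ Peak x := by
  refine ⟨fun h0 => ?_, le_antisymm (apply_le_norm _ _) ?_⟩
  · rw [h0] at hpos
    simp at hpos
  · exact norm_le_of_abs_le hpos.le fun z => by rw [abs_of_nonneg (f.2 z)]; exact h z

theorem norm_add_of_mem_peak {x : X} {f g : PosCone X} (hf : f ∈ Peak x) (hg : g ∈ Peak x) :
    ‖f.1 + g.1‖ = ‖f.1‖ + ‖g.1‖ := by
  refine le_antisymm (norm_add_le _ _) ?_
  have h := apply_le_norm (f.1 + g.1) x
  rw [ZeroAtInftyContinuousMap.add_apply, hf.2, hg.2] at h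
  exact h

theorem add_mem_peak {x : X} {f g : PosCone X} (hf : f ∈ Peak x) (hg : g ∈ Peak x) :
    add f g ∈ Peak x := by
  have hn : 0 < ‖f.1‖ := norm_pos_iff.2 hf.1
  have e : (add f g).1 x = ‖f.1‖ + ‖g.1‖ := by
    rw [← hf.2, ← hg.2]
    rfl
  refine mem_peak_of_forall_le ?_ fun z => ?_
  · rw [e]
    have := norm_nonneg g.1
    linarith
  · rw [e]
    exact add_le_add (apply_le_norm _ _) (apply_le_norm _ _)

theorem isClosed_maxSet (f : C₀(X, ℝ)) : IsClosed (MaxSet f) :=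
  isClosed_eq (map_continuous f) continuous_const

theorem isCompact_maxSet {f : C₀(X, ℝ)} (hf : f ≠ 0) : IsCompact (MaxSet f) := by
  have h : ∀ᶠ x in cocompact X, f x < ‖f‖ :=
    (zero_at_infty f).eventually_lt_const (norm_pos_iff.2 hf)
  obtain ⟨K, hK, hKf⟩ := mem_cocompact.1 h
  refine hK.of_isClosed_subset (isClosed_maxSet f) fun x hx => ?_
  by_contra hxK
  exact (show f x < ‖f‖ from hKf hxK).ne hx

theorem nonempty_maxSet {f : PosCone X} (hf : f.1 ≠ 0) : (MaxSet f.1).Nonempty := by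
  obtain ⟨x₀, hx₀⟩ : ∃ x₀, 0 < f.1 x₀ := by
    by_contra! h
    exact hf (ZeroAtInftyContinuousMap.ext fun x => le_antisymm (h x) (f.2 x))
  have hev : ∀ᶠ x in cocompact X, f.1 x ≤ f.1 x₀ :=
    ((zero_at_infty f.1).eventually_lt_const hx₀).mono fun _ h => h.le
  obtain ⟨x, hx⟩ := (map_continuous f.1).exists_forall_ge' x₀ hev
  exact ⟨x, (mem_peak_of_forall_le (hx₀.trans_le (hx x₀)) hx).2⟩

end Basic

/-! ### Peaking functions from Urysohn's lemma -/

section LocallyCompact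

variable {X : Type*} [TopologicalSpace X] [LocallyCompactSpace X] [T2Space X]

theorem exists_bump (x : X) {U : Set X} (hU : IsOpen U) (hx : x ∈ U) :
    ∃ b : PosCone X, b.1 x = 1 ∧ (∀ z, b.1 z ≤ 1) ∧ ∀ z ∉ U, b.1 z = 0 := by
  obtain ⟨b, hb1, hb0, hbc, hb⟩ := exists_continuous_one_zero_of_isCompact
    (isCompact_singleton (x := x)) hU.isClosed_compl
    (disjoint_singleton_left.2 fun h => h hx)
  exact ⟨⟨⟨b, hbc.is_zero_at_infty⟩, fun z => (hb z).1⟩, hb1 (mem_singleton x),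
    fun z => (hb z).2, fun z hz => hb0 hz⟩

theorem nonempty_peak (x : X) : (Peak x).Nonempty := by
  obtain ⟨b, hb1, hb, -⟩ := exists_bump x isOpen_univ (mem_univ x)
  exact ⟨b, mem_peak_of_forall_le (by rw [hb1]; exact one_pos) fun z => by rw [hb1]; exact hb z⟩

theorem exists_mem_peak_add (f : PosCone X) (x : X) :
    ∃ k ∈ Peak x, add f k ∈ Peak x := by
  obtain ⟨b, hb1, hb, -⟩ := exists_bump x isOpen_univ (mem_univ x)
  -- `k = b * (‖f‖ + 1 - |f - f x|)`: the last factor lowers the bump exactly where `f` exceeds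
  -- `f x`, and `‖f‖ + 1` is large enough to keep it positive.
  have hab : ∀ z, |f.1 z - f.1 x| ≤ ‖f.1‖ := fun z => by
    have h1 := apply_le_norm f.1 z
    have h2 := apply_le_norm f.1 x
    have h3 := f.2 z
    have h4 := f.2 x
    rw [abs_le]
    constructor <;> linarith
  have hcont : Continuous fun z => b.1 z * (‖f.1‖ + 1 - |f.1 z - f.1 x|) := by
    have h1 := map_continuous f.1
    have h2 := map_continuous b.1
    fun_prop
  have hk0 : ∀ z, 0 ≤ b.1 z * (‖f.1‖ + 1 - |f.1 z - f.1 x|) := fun z =>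
    mul_nonneg (b.2 z) (by linarith [hab z])
  have hlim : Tendsto (fun z => b.1 z * (‖f.1‖ + 1 - |f.1 z - f.1 x|)) (cocompact X) (𝓝 0) := by
    refine squeeze_zero (g := fun z => b.1 z * (‖f.1‖ + 1)) hk0 (fun z => ?_) ?_
    · exact mul_le_mul_of_nonneg_left (by linarith [abs_nonneg (f.1 z - f.1 x)]) (b.2 z)
    · simpa using (zero_at_infty b.1).mul_const (‖f.1‖ + 1)
  let k : PosCone X := ⟨⟨⟨_, hcont⟩, hlim⟩, hk0⟩
  have hk : ∀ z, k.1 z = b.1 z * (‖f.1‖ + 1 - |f.1 z - f.1 x|) := fun _ => rfl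
  have hkx : k.1 x = ‖f.1‖ + 1 := by simp [hk, hb1]
  have hn := norm_nonneg f.1
  have hadd : ∀ z, (add f k).1 z = f.1 z + k.1 z := fun _ => rfl
  refine ⟨k, mem_peak_of_forall_le (by rw [hkx]; linarith) fun z => ?_,
    mem_peak_of_forall_le (by rw [hadd, hkx]; linarith [f.2 x]) fun z => ?_⟩
  · rw [hkx, hk]
    nlinarith [hb z, b.2 z, hab z, abs_nonneg (f.1 z - f.1 x)]
  · rw [hadd, hadd, hkx, hk]
    have h1 := hb z
    have h0 := b.2 z
    have hz := apply_le_norm f.1 z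
    rcases le_total (f.1 z) (f.1 x) with h | h
    · nlinarith [hab z, abs_nonneg (f.1 z - f.1 x)]
    · rw [abs_of_nonneg (sub_nonneg.2 h)]
      nlinarith [f.2 x, mul_nonneg (sub_nonneg.2 h1) (by linarith [f.2 x] :
        0 ≤ ‖f.1‖ + 1 + f.1 x - f.1 z)]

theorem eq_of_forall_apply_eq {x x' : X} (h : ∀ f : PosCone X, f.1 x = f.1 x') : x = x' := by
  by_contra hne
  obtain ⟨b, hb1, -, hb0⟩ := exists_bump x (isOpen_compl_singleton (x := x')) hne
  have := h b
  rw [hb1, hb0 x' (fun h => h rfl)] at this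
  exact one_ne_zero this

theorem continuous_of_comp {Z : Type*} [TopologicalSpace Z] {p : Z → X}
    (h : ∀ f : PosCone X, Continuous fun z => f.1 (p z)) : Continuous p := by
  rw [continuous_iff_continuousAt]
  intro z U hU
  obtain ⟨V, hVU, hV, hzV⟩ := mem_nhds_iff.1 hU
  obtain ⟨b, hb1, -, hb0⟩ := exists_bump (p z) hV hzV
  have hz : ∀ᶠ w in 𝓝 z, 0 < b.1 (p w) :=
    (h b).continuousAt.eventually_const_lt (hb1 ▸ one_pos : 0 < b.1 (p z))
  refine mem_map.2 (hz.mono fun w hw => ?_)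
  by_contra hwU
  exact hw.ne' (hb0 _ fun hwV => hwU (hVU hwV))

end LocallyCompact

/-! ### Maps preserving the norms of sums and differences -/

section Maps

variable {X Y : Type*} [TopologicalSpace X] [TopologicalSpace Y] {T : PosCone X → PosCone Y}

theorem norm_map (hs : ∀ f g, ‖(T f).1 + (T g).1‖ = ‖f.1 + g.1‖) (f : PosCone X) :
    ‖(T f).1‖ = ‖f.1‖ := by
  have h := hs f f
  rw [← two_smul ℝ, ← two_smul ℝ, norm_smul, norm_smul] at h
  exact mul_left_cancel₀ (by norm_num) h

/-- A peak point of `T (f + g)` is a peak point of `T f`, whenever `f` and `g` peak together. -/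
theorem maxSet_map_add_subset (hs : ∀ f g, ‖(T f).1 + (T g).1‖ = ‖f.1 + g.1‖)
    (hd : ∀ f g, ‖(T f).1 - (T g).1‖ = ‖f.1 - g.1‖) {x : X} {f g h : PosCone X}
    (hf : f ∈ Peak x) (hg : g ∈ Peak x) (hh : h.1 = f.1 + g.1) :
    MaxSet (T h).1 ⊆ MaxSet (T f).1 := by
  intro y hy
  refine le_antisymm (apply_le_norm _ _) ?_
  have h1 := apply_le_norm ((T h).1 - (T f).1) y
  have h2 : (T h).1 y = ‖(T h).1‖ := hy
  rw [hd, ZeroAtInftyContinuousMap.sub_apply, h2, norm_map hs, hh, add_sub_cancel_left,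
    norm_add_of_mem_peak hf hg] at h1
  rw [norm_map hs]
  linarith

variable [LocallyCompactSpace X] [T2Space X]

/-- The images of all functions peaking at `x` peak at one common point. -/
theorem exists_common_peak (hs : ∀ f g, ‖(T f).1 + (T g).1‖ = ‖f.1 + g.1‖)
    (hd : ∀ f g, ‖(T f).1 - (T g).1‖ = ‖f.1 - g.1‖) (x : X) :
    ∃ y, ∀ f ∈ Peak x, (T f).1 y = ‖f.1‖ := by
  have hne : ∀ f : Peak x, (T f.1).1 ≠ 0 := fun f => by
    rw [← norm_ne_zero_iff, norm_map hs]
    exact norm_ne_zero_iff.2 f.2.1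
  have : Nonempty (Peak x) := (nonempty_peak x).to_subtype
  obtain ⟨y, hy⟩ := IsCompact.nonempty_iInter_of_directed_nonempty_isCompact_isClosed
    (fun f : Peak x => MaxSet (T f.1).1)
    (fun f g => ⟨⟨add f.1 g.1, add_mem_peak f.2 g.2⟩,
      maxSet_map_add_subset hs hd f.2 g.2 rfl,
      maxSet_map_add_subset hs hd g.2 f.2 (add_comm _ _)⟩)
    (fun f => nonempty_maxSet (hne f)) (fun f => isCompact_maxSet (hne f))
    (fun f => isClosed_maxSet _)
  refine ⟨y, fun f hf => ?_⟩
  rw [← norm_map hs]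
  exact mem_iInter.1 hy ⟨f, hf⟩

theorem exists_point_eval (hs : ∀ f g, ‖(T f).1 + (T g).1‖ = ‖f.1 + g.1‖)
    (hd : ∀ f g, ‖(T f).1 - (T g).1‖ = ‖f.1 - g.1‖) (x : X) :
    ∃ y, ∀ f, (T f).1 y = f.1 x := by
  obtain ⟨y, hy⟩ := exists_common_peak hs hd x
  refine ⟨y, fun f => ?_⟩
  obtain ⟨k, hk, hfk⟩ := exists_mem_peak_add f x
  have hkn := hk.2
  have hfkn : f.1 x + k.1 x = ‖f.1 + k.1‖ := hfk.2
  have hTk := hy k hk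
  have hTfk : (T (add f k)).1 y = ‖f.1 + k.1‖ := hy _ hfk
  have hupper := apply_le_norm ((T f).1 + (T k).1) y
  rw [hs, ZeroAtInftyContinuousMap.add_apply] at hupper
  have hlower := apply_le_norm ((T (add f k)).1 - (T f).1) y
  rw [hd, ZeroAtInftyContinuousMap.sub_apply, show (add f k).1 - f.1 = k.1 from
    add_sub_cancel_left _ _] at hlower
  apply le_antisymm <;> linarith

end Maps

end PosCone

/-! ### Phase-isometries -/

open PosCone in
theorem phase_isometry_is_composition {X Y : Type*}
    [TopologicalSpace X] [LocallyCompactSpace X] [T2Space X]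
    [TopologicalSpace Y] [LocallyCompactSpace Y] [T2Space Y]
    (T : PosCone X → PosCone Y)
    (hsurj : Function.Surjective T)
    (hphase : ∀ f g : PosCone X,
      ({‖(T f : C₀(Y, ℝ)) + (T g : C₀(Y, ℝ))‖, ‖(T f : C₀(Y, ℝ)) - (T g : C₀(Y, ℝ))‖} : Set ℝ)
        = {‖(f : C₀(X, ℝ)) + (g : C₀(X, ℝ))‖, ‖(f : C₀(X, ℝ)) - (g : C₀(X, ℝ))‖}) :
    ∃ φ : Y ≃ₜ X, ∀ (f : PosCone X) (y : Y), (T f : C₀(Y, ℝ)) y = (f : C₀(X, ℝ)) (φ y) := by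
  have hmax : ∀ f g, ‖(T f).1 + (T g).1‖ = ‖f.1 + g.1‖ ∧ ‖(T f).1 - (T g).1‖ = ‖f.1 - g.1‖ := by
    intro f g
    have h1 := norm_sub_le_norm_add f g
    have h2 := norm_sub_le_norm_add (T f) (T g)
    rcases Set.pair_eq_pair_iff.1 (hphase f g) with h | h
    · exact h
    · constructor <;> linarith [h.1, h.2]
  have hs := fun f g => (hmax f g).1
  have hd := fun f g => (hmax f g).2
  have hinj : Function.Injective T := fun f g h => by
    have := hd f g
    rw [h, sub_self, norm_zero] at this
    exact Subtype.ext (sub_eq_zero.1 (norm_eq_zero.1 this.symm))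
  obtain ⟨S, hTS⟩ := hsurj.hasRightInverse
  have hST : ∀ f, S (T f) = f := fun f => hinj (hTS _)
  choose ψ hψ using exists_point_eval hs hd
  choose φ hφ using exists_point_eval (T := S)
    (fun f g => by rw [← hs, hTS, hTS]) (fun f g => by rw [← hd, hTS, hTS])
  have hφT : ∀ y f, f.1 (φ y) = (T f).1 y := fun y f => by rw [← hφ, hST]
  refine ⟨⟨⟨φ, ψ, fun y => ?_, fun x => ?_⟩, ?_, ?_⟩, fun f y => (hφT y f).symm⟩
  · refine eq_of_forall_apply_eq fun g => ?_
    rw [← hTS g, hψ, hφT]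
  · exact eq_of_forall_apply_eq fun f => by rw [hφT, hψ]
  · refine continuous_of_comp fun f => ?_
    simp only [hφT]
    exact map_continuous (T f).1
  · refine continuous_of_comp fun g => ?_
    rw [← hTS g]
    simp only [hψ]
    exact map_continuous (S g).1
end

section
/- Let X and Y be locally compact Hausdorff spaces and let T : C₀(X,ℝ)⁺ → C₀(Y,ℝ)⁺ be a surjective phase-isometry. Then there exists a unique surjective linear isometry T̃ : C₀(X,ℝ) → C₀(Y,ℝ) such that T̃(f) = T(f) for all f ∈ C₀(X,ℝ)⁺. -/
/-!
On the positive cone `‖f - g‖ ≤ ‖f + g‖`, so comparing maxima and minima of the two sets shows that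
`T` preserves both `‖f + g‖` and `‖f - g‖`.

* A nonnegative `f` is determined, together with its order relations, by the norms `‖f + k‖`, `k ≥ 0`
  (`le_of_norm_add_le`: test with tall bumps `k`). Hence `T` is an order isomorphism.
* `(f - a)⁺` is the least `r ≥ 0` with `f ≤ r + a`. Together with `‖T f - T g‖ = ‖f - g‖` this gives
  `T ((f - a)⁺) ≤ (T f - a)⁺` (`map_trunc_le`).
* If `f x > a`, `g x > b`, `h x > c` with `a, b, c ≥ 0`, then `(f - a)⁺ ∧ (g - b)⁺ ∧ (h - c)⁺` is nonzero,
  and so is its image, which yields a point `y` with `T f y > a`, `T g y > b`, `T h y > c`. Hence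
  `‖f + g + h‖ ≤ ‖T f + T g + T h‖`, and equality follows by symmetry (`norm_three_le`, `norm_three`).
* Taking `h` arbitrary in `‖T (f + g) + T h‖ = ‖f + g + h‖ = ‖T f + T g + T h‖`, the first point gives
  `T (f + g) = T f + T g`.

The extension is `f ↦ T f⁺ - T f⁻`; it is additive and norm preserving, hence real linear.
-/


open scoped ZeroAtInfty

namespace PhaseIsometry

/-! ### The positive cone -/

section Basics

variable {X : Type*} [TopologicalSpace X]

lemma apply_le_norm (f : C₀(X, ℝ)) (x : X) : f x ≤ ‖f‖ :=
  (le_abs_self _).trans (f.toBCF.norm_coe_le_norm x)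

lemma abs_apply_le_norm (f : C₀(X, ℝ)) (x : X) : |f x| ≤ ‖f‖ :=
  f.toBCF.norm_coe_le_norm x

lemma norm_le_of_abs {f : C₀(X, ℝ)} {C : ℝ} (hC : 0 ≤ C) (h : ∀ x, |f x| ≤ C) : ‖f‖ ≤ C :=
  (BoundedContinuousFunction.norm_le (f := f.toBCF) hC).2 h

lemma norm_le_of_nonneg {f : C₀(X, ℝ)} {C : ℝ} (hC : 0 ≤ C) (h0 : ∀ x, 0 ≤ f x)
    (h : ∀ x, f x ≤ C) : ‖f‖ ≤ C :=
  norm_le_of_abs hC fun x => by rw [abs_of_nonneg (h0 x)]; exact h x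

/-- A continuous function `g` with `0 ≤ g ≤ |f|` for some `f ∈ C₀(X, ℝ)`, as an element of the
positive cone. -/
def dominated (f : C₀(X, ℝ)) (g : X → ℝ) (hg : Continuous g) (h0 : ∀ x, 0 ≤ g x)
    (hf : ∀ x, g x ≤ |f x|) : PosCone X :=
  ⟨⟨⟨g, hg⟩, squeeze_zero h0 hf (by simpa using f.zero_at_infty'.abs)⟩, h0⟩

/-- The truncation `(f - a)⁺`, for `a ≥ 0`. -/
def trunc (f : PosCone X) (a : ℝ) (ha : 0 ≤ a) : PosCone X :=
  dominated f.1 (fun x => max (f.1 x - a) 0)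
    (((map_continuous f.1).sub continuous_const).max continuous_const)
    (fun _ => le_max_right _ _)
    (fun x => max_le (by linarith [le_abs_self (f.1 x)]) (abs_nonneg _))

lemma trunc_apply (f : PosCone X) (a : ℝ) (ha : 0 ≤ a) (x : X) :
    (trunc f a ha).1 x = max (f.1 x - a) 0 := rfl

/-- The positive part `f⁺`; the negative part of `f` is `posPart (-f)`. -/
def posPart (f : C₀(X, ℝ)) : PosCone X :=
  dominated f (fun x => max (f x) 0) ((map_continuous f).max continuous_const)
    (fun _ => le_max_right _ _) (fun _ => max_le (le_abs_self _) (abs_nonneg _))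

lemma posPart_apply (f : C₀(X, ℝ)) (x : X) : (posPart f).1 x = max (f x) 0 := rfl

lemma posPart_sub (f : C₀(X, ℝ)) : (posPart f).1 - (posPart (-f)).1 = f := by
  ext x
  rw [ZeroAtInftyContinuousMap.sub_apply, posPart_apply, posPart_apply,
    ZeroAtInftyContinuousMap.neg_apply]
  rcases le_total (f x) 0 with h | h
  · rw [max_eq_right h, max_eq_left (by linarith)]; ring
  · rw [max_eq_left h, max_eq_right (by linarith)]; ring

/-- The sum of two elements of the positive cone. -/
def addCone (f g : PosCone X) : PosCone X :=
  ⟨f.1 + g.1, fun x => add_nonneg (f.2 x) (g.2 x)⟩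

lemma norm_sub_le_norm_add (f g : PosCone X) : ‖f.1 - g.1‖ ≤ ‖f.1 + g.1‖ := by
  refine norm_le_of_abs (norm_nonneg _) fun x => le_trans ?_ (apply_le_norm _ x)
  have := f.2 x
  have := g.2 x
  rw [ZeroAtInftyContinuousMap.sub_apply, ZeroAtInftyContinuousMap.add_apply, abs_le]
  constructor <;> linarith

/-- The pointwise order on the cone can be read off from norms of sums. If `F x > G x`, a bump of
height `‖G‖` concentrated near `x` makes `‖F + k‖` exceed `‖G + k‖`. -/
lemma le_of_norm_add_le [LocallyCompactSpace X] [T2Space X] {F G : PosCone X}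
    (h : ∀ k : PosCone X, ‖F.1 + k.1‖ ≤ ‖G.1 + k.1‖) (x : X) : F.1 x ≤ G.1 x := by
  by_contra! hx
  obtain ⟨ε, hε, hεx⟩ : ∃ ε : ℝ, 0 < ε ∧ G.1 x + ε < F.1 x :=
    ⟨(F.1 x - G.1 x) / 2, by linarith, by linarith⟩
  have ht : IsClosed {z | G.1 x + ε ≤ G.1 z} := isClosed_le continuous_const (map_continuous G.1)
  obtain ⟨φ, h1, h0, hc, h01⟩ := exists_continuous_one_zero_of_isCompact
    (isCompact_singleton (x := x)) ht (by
      rw [Set.disjoint_singleton_left]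
      simp only [Set.mem_ofPred_eq, not_le]
      linarith)
  have hN : 0 ≤ ‖G.1‖ := norm_nonneg _
  let φ₀ : C₀(X, ℝ) := ⟨φ, hc.is_zero_at_infty⟩
  let k : PosCone X := ⟨‖G.1‖ • φ₀, fun z => mul_nonneg hN (h01 z).1⟩
  have hk : ∀ z, k.1 z = ‖G.1‖ * φ z := fun _ => rfl
  have e1 : F.1 x + ‖G.1‖ ≤ ‖F.1 + k.1‖ := by
    have := apply_le_norm (F.1 + k.1) x
    have h1x : φ x = 1 := h1 rfl
    rwa [ZeroAtInftyContinuousMap.add_apply, hk, h1x, mul_one] at this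
  have e2 : ‖G.1 + k.1‖ ≤ G.1 x + ε + ‖G.1‖ := by
    have hGx := G.2 x
    refine norm_le_of_nonneg (by linarith) (addCone G k).2 fun z => ?_
    rw [ZeroAtInftyContinuousMap.add_apply, hk]
    by_cases hz : G.1 x + ε ≤ G.1 z
    · have h0z : φ z = 0 := h0 hz
      have := apply_le_norm G.1 z
      rw [h0z]
      linarith
    · have := mul_le_of_le_one_right hN (h01 z).2
      linarith
  linarith [h k]

end Basics

/-! ### Surjective maps preserving norms of sums and of differences -/

section Maps

variable {X Y : Type*} [TopologicalSpace X] [TopologicalSpace Y]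
  {T : PosCone X → PosCone Y}

lemma injective_of_norm_sub (hsub : ∀ f g, ‖(T f).1 - (T g).1‖ = ‖f.1 - g.1‖) :
    Function.Injective T := fun f g h => by
  have := hsub f g
  rw [h, sub_self, norm_zero, eq_comm, norm_eq_zero, sub_eq_zero] at this
  exact Subtype.ext this

lemma map_mono [LocallyCompactSpace Y] [T2Space Y] (hT : Function.Surjective T)
    (hadd : ∀ f g, ‖(T f).1 + (T g).1‖ = ‖f.1 + g.1‖)
    {f g : PosCone X} (h : ∀ x, f.1 x ≤ g.1 x) (y : Y) : (T f).1 y ≤ (T g).1 y := by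
  refine le_of_norm_add_le (fun k => ?_) y
  obtain ⟨k, rfl⟩ := hT k
  rw [hadd, hadd]
  refine norm_le_of_nonneg (norm_nonneg _) (addCone f k).2 fun x => ?_
  refine le_trans ?_ (apply_le_norm _ x)
  rw [ZeroAtInftyContinuousMap.add_apply, ZeroAtInftyContinuousMap.add_apply]
  linarith [h x]

/-- If `T r = (T f - a)⁺`, then `‖f - r‖ = ‖T f - T r‖ ≤ a`, so `f ≤ r + a` and `(f - a)⁺ ≤ r`;
now apply monotonicity. -/
lemma map_trunc_le [LocallyCompactSpace Y] [T2Space Y] (hT : Function.Surjective T)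
    (hadd : ∀ f g, ‖(T f).1 + (T g).1‖ = ‖f.1 + g.1‖)
    (hsub : ∀ f g, ‖(T f).1 - (T g).1‖ = ‖f.1 - g.1‖)
    (f : PosCone X) (a : ℝ) (ha : 0 ≤ a) (y : Y) :
    (T (trunc f a ha)).1 y ≤ max ((T f).1 y - a) 0 := by
  obtain ⟨r, hr⟩ := hT (trunc (T f) a ha)
  have hfr : ‖f.1 - r.1‖ ≤ a := by
    rw [← hsub, hr]
    refine norm_le_of_abs ha fun z => ?_
    have := (T f).2 z
    rw [ZeroAtInftyContinuousMap.sub_apply, trunc_apply, abs_le]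
    rcases le_total ((T f).1 z - a) 0 with h | h
    · rw [max_eq_right h]; constructor <;> linarith
    · rw [max_eq_left h]; constructor <;> linarith
  rw [← trunc_apply (T f) a ha, ← hr]
  refine map_mono hT hadd (fun x => ?_) y
  rw [trunc_apply]
  refine max_le ?_ (r.2 x)
  have := (apply_le_norm (f.1 - r.1) x).trans hfr
  rw [ZeroAtInftyContinuousMap.sub_apply] at this
  linarith

/-- Strict superlevel sets of `f`, `g`, `h` at nonnegative levels that have a common point are
mapped to superlevel sets of the images that have a common point. -/
lemma exists_common_point [LocallyCompactSpace Y] [T2Space Y] (hT : Function.Surjective T)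
    (hadd : ∀ f g, ‖(T f).1 + (T g).1‖ = ‖f.1 + g.1‖)
    (hsub : ∀ f g, ‖(T f).1 - (T g).1‖ = ‖f.1 - g.1‖)
    (f g h : PosCone X) {a b c : ℝ} (ha : 0 ≤ a) (hb : 0 ≤ b) (hc : 0 ≤ c) {x : X}
    (hf : a < f.1 x) (hg : b < g.1 x) (hh : c < h.1 x) :
    ∃ y, a < (T f).1 y ∧ b < (T g).1 y ∧ c < (T h).1 y := by
  have cf := map_continuous f.1
  have cg := map_continuous g.1
  have ch := map_continuous h.1
  let q : PosCone X := dominated f.1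
    (fun z => max (min (f.1 z - a) (min (g.1 z - b) (h.1 z - c))) 0) (by fun_prop)
    (fun _ => le_max_right _ _)
    (fun z => max_le ((min_le_left _ _).trans (by linarith [le_abs_self (f.1 z)])) (abs_nonneg _))
  have hq : ∀ z, q.1 z = max (min (f.1 z - a) (min (g.1 z - b) (h.1 z - c))) 0 := fun _ => rfl
  have hqx : 0 < q.1 x := by
    rw [hq]
    exact lt_max_of_lt_left (lt_min (by linarith) (lt_min (by linarith) (by linarith)))
  -- `‖T q‖ = ‖q‖`, by comparing `T q + T q` with `q + q`.
  have hTq : (T q).1 ≠ 0 := fun h0 => by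
    have e := hadd q q
    rw [h0, add_zero, norm_zero] at e
    have := apply_le_norm (q.1 + q.1) x
    rw [ZeroAtInftyContinuousMap.add_apply] at this
    linarith
  obtain ⟨y, hy⟩ : ∃ y, (T q).1 y ≠ 0 := by
    by_contra! hcon
    exact hTq (ZeroAtInftyContinuousMap.ext hcon)
  have hy' : 0 < (T q).1 y := lt_of_le_of_ne ((T q).2 y) hy.symm
  have key : ∀ (u : PosCone X) (d : ℝ) (hd : 0 ≤ d),
      (∀ z, q.1 z ≤ (trunc u d hd).1 z) → d < (T u).1 y := fun u d hd hle => by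
    have h1 := (map_mono hT hadd hle y).trans (map_trunc_le hT hadd hsub u d hd y)
    rcases lt_max_iff.1 (hy'.trans_le h1) with h2 | h2
    · linarith
    · exact absurd h2 (lt_irrefl _)
  refine ⟨y, key f a ha fun z => ?_, key g b hb fun z => ?_, key h c hc fun z => ?_⟩
  · rw [hq, trunc_apply]
    exact max_le_max_right _ (min_le_left _ _)
  · rw [hq, trunc_apply]
    exact max_le_max_right _ ((min_le_right _ _).trans (min_le_left _ _))
  · rw [hq, trunc_apply]
    exact max_le_max_right _ ((min_le_right _ _).trans (min_le_right _ _))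

lemma norm_three_le [LocallyCompactSpace Y] [T2Space Y] (hT : Function.Surjective T)
    (hadd : ∀ f g, ‖(T f).1 + (T g).1‖ = ‖f.1 + g.1‖)
    (hsub : ∀ f g, ‖(T f).1 - (T g).1‖ = ‖f.1 - g.1‖) (f g h : PosCone X) :
    ‖f.1 + g.1 + h.1‖ ≤ ‖(T f).1 + (T g).1 + (T h).1‖ := by
  refine norm_le_of_nonneg (norm_nonneg _) (addCone (addCone f g) h).2 fun x => ?_
  -- Where one of the three functions vanishes, the two-term identity suffices.
  have drop : ∀ u v : PosCone X,
      (∀ y, (T u).1 y + (T v).1 y ≤ (T f).1 y + (T g).1 y + (T h).1 y) →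
      u.1 x + v.1 x ≤ ‖(T f).1 + (T g).1 + (T h).1‖ := fun u v huv => by
    refine (apply_le_norm (u.1 + v.1) x).trans ?_
    rw [← hadd]
    exact norm_le_of_nonneg (norm_nonneg _) (addCone (T u) (T v)).2 fun y =>
      (huv y).trans (apply_le_norm ((T f).1 + (T g).1 + (T h).1) y)
  have hsum : (f.1 + g.1 + h.1) x = f.1 x + g.1 x + h.1 x := rfl
  rw [hsum]
  rcases (f.2 x).eq_or_lt with hf | hf
  · linarith [drop g h fun y => by linarith [(T f).2 y]]
  rcases (g.2 x).eq_or_lt with hg | hg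
  · linarith [drop f h fun y => by linarith [(T g).2 y]]
  rcases (h.2 x).eq_or_lt with hh | hh
  · linarith [drop f g fun y => by linarith [(T h).2 y]]
  refine le_of_forall_pos_le_add fun ε hε => ?_
  obtain ⟨δ, hδ, hδ'⟩ := exists_between
    (lt_min (show 0 < ε / 3 by linarith) (lt_min hf (lt_min hg hh)))
  simp only [lt_min_iff] at hδ'
  obtain ⟨h1, h2, h3, h4⟩ := hδ'
  obtain ⟨y, hy1, hy2, hy3⟩ := exists_common_point hT hadd hsub f g h
    (a := f.1 x - δ) (b := g.1 x - δ) (c := h.1 x - δ) (x := x)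
    (by linarith) (by linarith) (by linarith) (by linarith) (by linarith) (by linarith)
  have hy : (T f).1 y + (T g).1 y + (T h).1 y ≤ ‖(T f).1 + (T g).1 + (T h).1‖ :=
    apply_le_norm ((T f).1 + (T g).1 + (T h).1) y
  linarith

lemma norm_three [LocallyCompactSpace X] [T2Space X] [LocallyCompactSpace Y] [T2Space Y]
    (hT : Function.Surjective T)
    (hadd : ∀ f g, ‖(T f).1 + (T g).1‖ = ‖f.1 + g.1‖)
    (hsub : ∀ f g, ‖(T f).1 - (T g).1‖ = ‖f.1 - g.1‖) (f g h : PosCone X) :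
    ‖(T f).1 + (T g).1 + (T h).1‖ = ‖f.1 + g.1 + h.1‖ := by
  refine le_antisymm ?_ (norm_three_le hT hadd hsub f g h)
  -- The inverse of `T` satisfies the same hypotheses.
  obtain ⟨S, hS⟩ := hT.hasRightInverse
  have hS' : ∀ u, S (T u) = u := fun u => injective_of_norm_sub hsub (hS (T u))
  have := norm_three_le (T := S) (fun u => ⟨T u, hS' u⟩)
    (fun u v => by rw [← hadd, hS, hS]) (fun u v => by rw [← hsub, hS, hS]) (T f) (T g) (T h)
  rwa [hS', hS', hS'] at this

lemma map_add [LocallyCompactSpace X] [T2Space X] [LocallyCompactSpace Y] [T2Space Y]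
    (hT : Function.Surjective T)
    (hadd : ∀ f g, ‖(T f).1 + (T g).1‖ = ‖f.1 + g.1‖)
    (hsub : ∀ f g, ‖(T f).1 - (T g).1‖ = ‖f.1 - g.1‖) (f g : PosCone X) :
    (T (addCone f g)).1 = (T f).1 + (T g).1 := by
  have key : ∀ k : PosCone Y,
      ‖(T (addCone f g)).1 + k.1‖ = ‖(addCone (T f) (T g)).1 + k.1‖ := fun k => by
    obtain ⟨k, rfl⟩ := hT k
    exact (hadd _ _).trans (norm_three hT hadd hsub f g k).symm
  ext y
  exact le_antisymm (le_of_norm_add_le (fun k => (key k).le) y)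
    (le_of_norm_add_le (F := addCone (T f) (T g)) (fun k => (key k).ge) y)

end Maps

end PhaseIsometry

/-! ### The linear extension -/

open PhaseIsometry

theorem phase_isometry_extends {X Y : Type*}
    [TopologicalSpace X] [LocallyCompactSpace X] [T2Space X]
    [TopologicalSpace Y] [LocallyCompactSpace Y] [T2Space Y]
    (T : PosCone X → PosCone Y)
    (hsurj : Function.Surjective T)
    (hphase : ∀ f g : PosCone X,
      ({‖(T f : C₀(Y, ℝ)) + (T g : C₀(Y, ℝ))‖, ‖(T f : C₀(Y, ℝ)) - (T g : C₀(Y, ℝ))‖} : Set ℝ)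
        = {‖(f : C₀(X, ℝ)) + (g : C₀(X, ℝ))‖, ‖(f : C₀(X, ℝ)) - (g : C₀(X, ℝ))‖}) :
    ∃! Ttilde : C₀(X, ℝ) →ₗᵢ[ℝ] C₀(Y, ℝ),
      Function.Surjective Ttilde ∧
        ∀ f : PosCone X, Ttilde (f : C₀(X, ℝ)) = (T f : C₀(Y, ℝ)) := by
  have hmm : ∀ f g : PosCone X, ‖(T f).1 + (T g).1‖ = ‖f.1 + g.1‖ ∧
      ‖(T f).1 - (T g).1‖ = ‖f.1 - g.1‖ := fun f g => by
    have h1 := norm_sub_le_norm_add f g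
    have h2 := norm_sub_le_norm_add (T f) (T g)
    rcases Set.pair_eq_pair_iff.1 (hphase f g) with h | ⟨h3, h4⟩
    · exact h
    · constructor <;> linarith
  have hadd := fun f g => (hmm f g).1
  have hsub := fun f g => (hmm f g).2
  have hTadd := PhaseIsometry.map_add hsurj hadd hsub
  let L : C₀(X, ℝ) → C₀(Y, ℝ) := fun f => (T (posPart f)).1 - (T (posPart (-f))).1
  -- `L` may be computed from any decomposition into a difference of nonnegative functions.
  have hL : ∀ (f : C₀(X, ℝ)) (a b : PosCone X), f = a.1 - b.1 → L f = (T a).1 - (T b).1 := by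
    intro f a b hf
    have e : addCone (posPart f) b = addCone a (posPart (-f)) := Subtype.ext <| by
      have := posPart_sub f
      change (posPart f).1 + b.1 = a.1 + (posPart (-f)).1
      rw [← sub_eq_sub_iff_add_eq_add, this, hf]
    have e2 := hTadd (posPart f) b
    rw [e, hTadd] at e2
    exact sub_eq_sub_iff_add_eq_add.2 e2.symm
  have hLadd : ∀ f g, L (f + g) = L f + L g := fun f g => by
    rw [hL (f + g) (addCone (posPart f) (posPart g)) (addCone (posPart (-f)) (posPart (-g))),
      hTadd, hTadd]
    · simp only [L]
      abel
    · change f + g = ((posPart f).1 + (posPart g).1) - ((posPart (-f)).1 + (posPart (-g)).1)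
      conv_lhs => rw [← posPart_sub f, ← posPart_sub g]
      abel
  have hLnorm : ∀ f, ‖L f‖ = ‖f‖ := fun f => by
    rw [hsub, posPart_sub]
  let A : C₀(X, ℝ) →+ C₀(Y, ℝ) := AddMonoidHom.mk' L hLadd
  have hA : Continuous A := (AddMonoidHomClass.isometry_of_norm A hLnorm).continuous
  have hLT : ∀ f : PosCone X, L f.1 = (T f).1 := fun f => by
    have e := hTadd f f
    rw [hL f.1 (addCone f f) f (add_sub_cancel_right f.1 f.1).symm, e, add_sub_cancel_right]
  refine ⟨⟨(A.toRealLinearMap hA).toLinearMap, hLnorm⟩, ⟨fun G => ?_, hLT⟩, ?_⟩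
  · obtain ⟨a, ha⟩ := hsurj (posPart G)
    obtain ⟨b, hb⟩ := hsurj (posPart (-G))
    refine ⟨a.1 - b.1, (hL _ a b rfl).trans ?_⟩
    rw [ha, hb, posPart_sub]
  · rintro U ⟨-, hU⟩
    ext1 f
    change U f = L f
    conv_lhs => rw [← posPart_sub f, map_sub, hU, hU]
end

section
/- Let X and Y be locally compact Hausdorff spaces. If T : C₀(X,ℝ)⁺ → C₀(Y,ℝ)⁺ is a phase-isometry (not assumed surjective), then T is an isometry, i.e. ‖T(f) − T(g)‖ = ‖f − g‖ for all f, g ∈ C₀(X,ℝ)⁺. -/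
/-!
For nonnegative `f` and `g` one has `|f - g| ≤ f + g` pointwise, so `‖f - g‖ ≤ ‖f + g‖`
(`PosCone.norm_sub_le_norm_add`). Hence `‖f - g‖` is the smaller element of the pair
`{‖f + g‖, ‖f - g‖}`, and equality of the two pairs, as sets, forces equality of their smaller elements.
-/

open scoped ZeroAtInfty

theorem PosCone.norm_sub_le_norm_add_s2 {X : Type*} [TopologicalSpace X] (f g : PosCone X) :
    ‖(f : C₀(X, ℝ)) - (g : C₀(X, ℝ))‖ ≤ ‖(f : C₀(X, ℝ)) + (g : C₀(X, ℝ))‖ := by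
  rw [← ZeroAtInftyContinuousMap.norm_toBCF_eq_norm]
  refine (BoundedContinuousFunction.norm_le (norm_nonneg _)).2 fun x => ?_
  have h := BoundedContinuousFunction.norm_coe_le_norm
    ((f : C₀(X, ℝ)) + (g : C₀(X, ℝ))).toBCF x
  rw [ZeroAtInftyContinuousMap.norm_toBCF_eq_norm] at h
  refine le_trans ?_ h
  have hf := f.2 x
  have hg := g.2 x
  change |f.1 x - g.1 x| ≤ |f.1 x + g.1 x|
  rw [abs_of_nonneg (add_nonneg hf hg), abs_le]
  constructor <;> linarith

theorem phase_isometry_is_isometry {X Y : Type*}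
    [TopologicalSpace X] [LocallyCompactSpace X] [T2Space X]
    [TopologicalSpace Y] [LocallyCompactSpace Y] [T2Space Y]
    (T : PosCone X → PosCone Y)
    (hphase : ∀ f g : PosCone X,
      ({‖(T f : C₀(Y, ℝ)) + (T g : C₀(Y, ℝ))‖, ‖(T f : C₀(Y, ℝ)) - (T g : C₀(Y, ℝ))‖} : Set ℝ)
        = {‖(f : C₀(X, ℝ)) + (g : C₀(X, ℝ))‖, ‖(f : C₀(X, ℝ)) - (g : C₀(X, ℝ))‖}) :
    ∀ f g : PosCone X,
      ‖(T f : C₀(Y, ℝ)) - (T g : C₀(Y, ℝ))‖ = ‖(f : C₀(X, ℝ)) - (g : C₀(X, ℝ))‖ := by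
  intro f g
  have hT := PosCone.norm_sub_le_norm_add_s2 (T f) (T g)
  have hX := PosCone.norm_sub_le_norm_add_s2 f g
  rcases Set.pair_eq_pair_iff.1 (hphase f g) with ⟨_, h⟩ | ⟨h₁, h₂⟩
  · exact h
  · linarith
end

section
/- Let X and Y be locally compact Hausdorff spaces, let T : C₀(X,ℝ)⁺ → C₀(Y,ℝ)⁺ be a bijective isometry with inverse S = T⁻¹, and set s₀ = S(0). If u ∈ C₀(Y,ℝ)⁺ satisfies ‖s₀‖ < ‖u‖, then ‖u‖ ≤ ‖S(u)‖. -/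
/-!
The inverse `S` is again an isometry, so `‖u‖ = ‖u - 0‖ = ‖S u - S 0‖`. Two nonnegative functions
satisfy `‖f - g‖ ≤ max ‖f‖ ‖g‖` (`norm_sub_le_max_of_nonneg`), hence `‖u‖ ≤ max ‖S u‖ ‖S 0‖`, and
`‖S 0‖ < ‖u‖` leaves only `‖u‖ ≤ ‖S u‖`.
-/


open scoped ZeroAtInfty

/-- The sup norm satisfies an ultrametric-type bound on the positive cone: a difference of two nonnegative
functions is bounded by the larger of the two norms: pointwise, `|a - b| ≤ max a b` for
`a, b ≥ 0`. This fails without positivity, where only the sum of the norms is a bound. -/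
theorem norm_sub_le_max_of_nonneg {X : Type*} [TopologicalSpace X] (f g : C₀(X, ℝ))
    (hf : ∀ x, 0 ≤ f x) (hg : ∀ x, 0 ≤ g x) : ‖f - g‖ ≤ max ‖f‖ ‖g‖ := by
  rw [← ZeroAtInftyContinuousMap.norm_toBCF_eq_norm (f := f - g),
    BoundedContinuousFunction.norm_le (le_max_of_le_left (norm_nonneg f))]
  intro x
  have h1 : f x ≤ ‖f‖ := (le_abs_self _).trans (f.toBCF.norm_coe_le_norm x)
  have h2 : g x ≤ ‖g‖ := (le_abs_self _).trans (g.toBCF.norm_coe_le_norm x)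
  change |f x - g x| ≤ _
  have := hf x
  have := hg x
  rw [abs_le]
  constructor
  · linarith [le_max_right ‖f‖ ‖g‖]
  · linarith [le_max_left ‖f‖ ‖g‖]

theorem lem_2_1 {X Y : Type*}
    [TopologicalSpace X] [LocallyCompactSpace X] [T2Space X]
    [TopologicalSpace Y] [LocallyCompactSpace Y] [T2Space Y]
    (T : PosCone X → PosCone Y)
    (hiso : ∀ f g : PosCone X,
      ‖(T f : C₀(Y, ℝ)) - (T g : C₀(Y, ℝ))‖ = ‖(f : C₀(X, ℝ)) - (g : C₀(X, ℝ))‖)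
    (hbij : Function.Bijective T)
    (S : PosCone Y → PosCone X)
    (hTS : Function.LeftInverse S T) (hST : Function.RightInverse S T)
    (u : PosCone Y)
    (hu : ‖(S 0 : C₀(X, ℝ))‖ < ‖(u : C₀(Y, ℝ))‖) :
    ‖(u : C₀(Y, ℝ))‖ ≤ ‖(S u : C₀(X, ℝ))‖ := by
  have h : ‖(u : C₀(Y, ℝ))‖ = ‖(S u : C₀(X, ℝ)) - (S 0 : C₀(X, ℝ))‖ := by
    rw [← hiso (S u) (S 0), hST u, hST 0]
    exact congrArg norm (sub_zero (u : C₀(Y, ℝ))).symm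
  have hmax := norm_sub_le_max_of_nonneg (S u : C₀(X, ℝ)) (S 0 : C₀(X, ℝ)) (S u).2 (S 0).2
  rw [← h] at hmax
  exact (le_max_iff.mp hmax).resolve_right hu.not_ge
end

section
/- Let X and Y be locally compact Hausdorff spaces, let T : C₀(X,ℝ)⁺ → C₀(Y,ℝ)⁺ be a bijective isometry with inverse S = T⁻¹, and set t₀ = T(0) and s₀ = S(0). Then ‖S(u)‖ = ‖u‖ holds for every u ∈ C₀(Y,ℝ)⁺ with max{‖t₀‖, ‖s₀‖} < ‖u‖. -/
/-!
For nonnegative `f`, `g` one has `|f x - g x| ≤ max (f x) (g x)` pointwise, so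
`‖f - g‖ ≤ max ‖f‖ ‖g‖`. Since `‖S u‖ = ‖S u - 0‖ = ‖u - T 0‖` and `‖u‖ = ‖u - 0‖ = ‖S u - S 0‖`,
this gives `‖S u‖ ≤ max ‖u‖ ‖T 0‖ = ‖u‖` and `‖u‖ ≤ max ‖S u‖ ‖S 0‖`; as `‖S 0‖ < ‖u‖`, the
latter maximum can only be `‖S u‖`.
-/

open scoped ZeroAtInfty

theorem PosCone.norm_sub_le_max {X : Type*} [TopologicalSpace X] (f g : PosCone X) :
    ‖(f : C₀(X, ℝ)) - (g : C₀(X, ℝ))‖ ≤ max ‖(f : C₀(X, ℝ))‖ ‖(g : C₀(X, ℝ))‖ := by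
  have hle : ∀ (h : C₀(X, ℝ)) (x : X), h x ≤ ‖h‖ := fun h x =>
    (le_abs_self _).trans (h.toBCF.norm_coe_le_norm x)
  rw [← ZeroAtInftyContinuousMap.norm_toBCF_eq_norm,
    BoundedContinuousFunction.norm_le (le_max_of_le_left (norm_nonneg _))]
  intro x
  change |f.1 x - g.1 x| ≤ _
  have hf := f.2 x
  have hg := g.2 x
  rw [abs_le]
  constructor
  · linarith [(hle g.1 x).trans (le_max_right ‖f.1‖ ‖g.1‖)]
  · linarith [(hle f.1 x).trans (le_max_left ‖f.1‖ ‖g.1‖)]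

theorem lem_2_2 {X Y : Type*}
    [TopologicalSpace X] [LocallyCompactSpace X] [T2Space X]
    [TopologicalSpace Y] [LocallyCompactSpace Y] [T2Space Y]
    (T : PosCone X → PosCone Y)
    (hiso : ∀ f g : PosCone X,
      ‖(T f : C₀(Y, ℝ)) - (T g : C₀(Y, ℝ))‖ = ‖(f : C₀(X, ℝ)) - (g : C₀(X, ℝ))‖)
    (hbij : Function.Bijective T)
    (S : PosCone Y → PosCone X)
    (hTS : Function.LeftInverse S T) (hST : Function.RightInverse S T)
    (u : PosCone Y)
    (hu : max ‖(T 0 : C₀(Y, ℝ))‖ ‖(S 0 : C₀(X, ℝ))‖ < ‖(u : C₀(Y, ℝ))‖) :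
    ‖(S u : C₀(X, ℝ))‖ = ‖(u : C₀(Y, ℝ))‖ := by
  obtain ⟨ht, hs⟩ := max_lt_iff.mp hu
  have h1 : ‖(S u : C₀(X, ℝ))‖ = ‖(u : C₀(Y, ℝ)) - (T 0 : C₀(Y, ℝ))‖ := by
    have h := hiso (S u) 0
    rw [hST u, show ((0 : PosCone X) : C₀(X, ℝ)) = 0 from rfl, sub_zero] at h
    exact h.symm
  have h2 : ‖(u : C₀(Y, ℝ))‖ = ‖(S u : C₀(X, ℝ)) - (S 0 : C₀(X, ℝ))‖ := by
    have h := hiso (S u) (S 0)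
    rw [hST u, hST 0, show ((0 : PosCone Y) : C₀(Y, ℝ)) = 0 from rfl, sub_zero] at h
    exact h
  apply le_antisymm
  · rw [h1]
    exact (PosCone.norm_sub_le_max u (T 0)).trans (max_le le_rfl ht.le)
  · rcases le_max_iff.mp (h2.le.trans (PosCone.norm_sub_le_max (S u) (S 0))) with h | h
    · exact h
    · exact absurd h hs.not_ge
end

section
/- Let X be a locally compact Hausdorff space and for x ∈ X let P_x = {f ∈ C₀(X,ℝ)⁺ : f ≠ 0 and f(x) = ‖f‖}. If x₀, x₁ ∈ X satisfy P_{x₀} ⊆ P_{x₁}, then x₀ = x₁. -/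
/-!
Peak sets separate points because `C₀(X, ℝ)⁺` does: if `x₀ ≠ x₁`, Urysohn's lemma for locally
compact Hausdorff spaces gives a compactly supported `f : X → [0, 1]` with `f x₀ = 1` and
`f x₁ = 0`. Then `‖f‖ = 1`, so `f` peaks at `x₀` but not at `x₁`.
-/

open scoped ZeroAtInfty

theorem lem_2_4 {X : Type*}
    [TopologicalSpace X] [LocallyCompactSpace X] [T2Space X]
    (x₀ x₁ : X) (h : Peak x₀ ⊆ Peak x₁) :
    x₀ = x₁ := by
  by_contra hne
  -- Urysohn bump: value `1` at `x₀`, value `0` at `x₁`, compact support.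
  obtain ⟨f, hf₀, hf₁, hfc, hf⟩ := exists_continuous_one_zero_of_isCompact
    (isCompact_singleton (x := x₀)) (isClosed_singleton (x := x₁))
    (Set.disjoint_singleton.2 hne)
  have hx₀ : f x₀ = 1 := hf₀ rfl
  have hx₁ : f x₁ = 0 := hf₁ rfl
  let g : C₀(X, ℝ) := ⟨f, hfc.is_zero_at_infty⟩
  have hg₀ : g x₀ = 1 := hx₀
  have hnorm : ‖g‖ = 1 := by
    rw [← ZeroAtInftyContinuousMap.norm_toBCF_eq_norm]
    apply le_antisymm
    · refine (BoundedContinuousFunction.norm_le zero_le_one).2 fun x => ?_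
      change ‖f x‖ ≤ 1
      rw [Real.norm_of_nonneg (hf x).1]
      exact (hf x).2
    · have hle := g.toBCF.norm_coe_le_norm x₀
      change ‖f x₀‖ ≤ _ at hle
      rwa [hx₀, norm_one] at hle
  have hg : (⟨g, fun x => (hf x).1⟩ : PosCone X) ∈ Peak x₀ :=
    ⟨norm_ne_zero_iff.1 (hnorm.trans_ne one_ne_zero), hg₀.trans hnorm.symm⟩
  have hg₁ : g x₁ = ‖g‖ := (h hg).2
  exact zero_ne_one (hx₁.symm.trans (hg₁.trans hnorm))
end

section
/- Let X and Y be locally compact Hausdorff spaces, let T : C₀(X,ℝ)⁺ → C₀(Y,ℝ)⁺ be a bijective isometry with inverse S = T⁻¹, and for y ∈ Y let P_y = {u ∈ C₀(Y,ℝ)⁺ : u ≠ 0 and u(y) = ‖u‖}; for f ∈ C₀(X,ℝ), let M(f) = {x ∈ X : f(x) = ‖f‖}. For any y₀ ∈ Y, any n ∈ ℕ, and any functions u₀, …, u_n ∈ P_{y₀}, the intersection ⋂_{k=0}^{n} M(S(u_k)) is non-empty. -/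
/-!
The proof is purely metric. The origin is the only point of a positive cone that is not a metric
midpoint of two others: a nonzero `p` is the midpoint of `0` and `2p`, whereas two nonnegative
functions of norm at most `r` are at distance at most `r` from each other (`norm_sub_le_of_nonneg`).
Hence `T 0 = 0` (`map_zero_of_isometry`), so `T` and `S` preserve norms.

Now let `v` be the sum of the `u k`. Since all `u k` peak at `y₀`, norms add up, and
`‖v - u k‖ ≤ ‖v‖ - ‖u k‖`. At a point `x` where `S v` attains its norm `‖v‖`, this
gives `‖v‖ - S (u k) x ≤ ‖S v - S (u k)‖ ≤ ‖v‖ - ‖u k‖`, so `S (u k)` also attains its norm at `x`,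
for every `k` simultaneously.
-/

open scoped ZeroAtInfty

theorem abs_apply_le_norm {X : Type*} [TopologicalSpace X] (f : C₀(X, ℝ)) (x : X) :
    |f x| ≤ ‖f‖ := by
  rw [← ZeroAtInftyContinuousMap.norm_toBCF_eq_norm]
  exact f.toBCF.norm_coe_le_norm x

theorem norm_le_of_forall_abs_le {X : Type*} [TopologicalSpace X] (f : C₀(X, ℝ)) {c : ℝ}
    (hc : 0 ≤ c) (h : ∀ x, |f x| ≤ c) : ‖f‖ ≤ c := by
  rw [← ZeroAtInftyContinuousMap.norm_toBCF_eq_norm]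
  exact (BoundedContinuousFunction.norm_le hc).2 h

/-- On the positive cone the triangle inequality through the origin improves from a sum to a
maximum; this is what singles out the origin metrically. -/
theorem norm_sub_le_of_nonneg {X : Type*} [TopologicalSpace X] {f g : C₀(X, ℝ)}
    (hf : ∀ x, 0 ≤ f x) (hg : ∀ x, 0 ≤ g x) {r : ℝ} (hfr : ‖f‖ ≤ r) (hgr : ‖g‖ ≤ r) :
    ‖f - g‖ ≤ r := by
  refine norm_le_of_forall_abs_le _ ((norm_nonneg f).trans hfr) fun x => ?_
  have h1 := (le_abs_self _).trans (abs_apply_le_norm f x)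
  have h2 := (le_abs_self _).trans (abs_apply_le_norm g x)
  have h3 := hf x
  have h4 := hg x
  rw [ZeroAtInftyContinuousMap.sub_apply, abs_le]
  constructor <;> linarith

theorem exists_apply_eq_norm {X : Type*} [TopologicalSpace X] {f : C₀(X, ℝ)}
    (hf : ∀ x, 0 ≤ f x) (h0 : f ≠ 0) : ∃ x, f x = ‖f‖ := by
  obtain ⟨x₀, hx₀⟩ : ∃ x, f x ≠ 0 := by
    by_contra! h
    exact h0 (ZeroAtInftyContinuousMap.ext h)
  have hpos : 0 < f x₀ := lt_of_le_of_ne (hf x₀) (Ne.symm hx₀)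
  obtain ⟨x, hx⟩ := f.continuous.exists_forall_ge' x₀
    (((zero_at_infty f).eventually (gt_mem_nhds hpos)).mono fun _ h => le_of_lt h)
  refine ⟨x, le_antisymm ((le_abs_self _).trans (abs_apply_le_norm f x)) ?_⟩
  refine norm_le_of_forall_abs_le f (hf x) fun y => ?_
  rw [abs_of_nonneg (hf y)]
  exact hx y

theorem map_zero_of_isometry {X Y : Type*} [TopologicalSpace X] [TopologicalSpace Y]
    (T : PosCone X → PosCone Y)
    (hiso : ∀ f g : PosCone X,
      ‖(T f : C₀(Y, ℝ)) - (T g : C₀(Y, ℝ))‖ = ‖(f : C₀(X, ℝ)) - (g : C₀(X, ℝ))‖)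
    (S : PosCone Y → PosCone X) (hST : Function.RightInverse S T) :
    ((T 0 : PosCone Y) : C₀(Y, ℝ)) = 0 := by
  set p := T 0 with hp
  let q : PosCone Y := ⟨p.1 + p.1, fun y => add_nonneg (p.2 y) (p.2 y)⟩
  have h0 : ((0 : PosCone X) : C₀(X, ℝ)) = 0 := rfl
  have h0' : ((0 : PosCone Y) : C₀(Y, ℝ)) = 0 := rfl
  have hqv : (q : C₀(Y, ℝ)) = p.1 + p.1 := rfl
  have h1 : ‖p.1‖ = ‖(S q).1‖ := by
    have := hiso (S q) 0
    rwa [hST q, ← hp, hqv, h0, sub_zero, add_sub_cancel_right] at this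
  have h2 : ‖p.1‖ = ‖(S 0).1‖ := by
    have := hiso (S 0) 0
    rwa [hST 0, ← hp, h0, h0', sub_zero, zero_sub, norm_neg] at this
  have h3 : ‖p.1 + p.1‖ = ‖(S q).1 - (S 0).1‖ := by
    have := hiso (S q) (S 0)
    rwa [hST q, hST 0, hqv, h0', sub_zero] at this
  have h4 := norm_sub_le_of_nonneg (S q).2 (S 0).2 h1.ge h2.ge
  rw [← h3, ← two_smul ℝ, norm_smul, Real.norm_ofNat] at h4
  have h5 := norm_nonneg p.1
  exact norm_eq_zero.1 (by linarith)

theorem sumCone_apply {Y : Type*} [TopologicalSpace Y] {n : ℕ} (u : Fin n → PosCone Y) (y : Y) :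
    (sumCone u : C₀(Y, ℝ)) y = ∑ k, (u k : C₀(Y, ℝ)) y :=
  map_sum ((Pi.evalAddMonoidHom (fun _ : Y => ℝ) y).comp
    ⟨⟨fun f : C₀(Y, ℝ) => ⇑f, ZeroAtInftyContinuousMap.coe_zero⟩,
      ZeroAtInftyContinuousMap.coe_add⟩) _ _

theorem lem_2_6 {X Y : Type*}
    [TopologicalSpace X] [LocallyCompactSpace X] [T2Space X]
    [TopologicalSpace Y] [LocallyCompactSpace Y] [T2Space Y]
    (T : PosCone X → PosCone Y)
    (hiso : ∀ f g : PosCone X,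
      ‖(T f : C₀(Y, ℝ)) - (T g : C₀(Y, ℝ))‖ = ‖(f : C₀(X, ℝ)) - (g : C₀(X, ℝ))‖)
    (hbij : Function.Bijective T)
    (S : PosCone Y → PosCone X)
    (hTS : Function.LeftInverse S T) (hST : Function.RightInverse S T)
    (y₀ : Y) (n : ℕ) (u : Fin (n + 1) → PosCone Y)
    (hu : ∀ k, u k ∈ Peak y₀) :
    (⋂ k, MaxSet (S (u k) : C₀(X, ℝ))).Nonempty := by
  have hT0 := map_zero_of_isometry T hiso S hST
  have hnorm : ∀ w : PosCone Y, ‖(S w).1‖ = ‖w.1‖ := fun w => by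
    have := hiso (S w) 0
    rw [hST w, hT0, sub_zero, show ((0 : PosCone X) : C₀(X, ℝ)) = 0 from rfl, sub_zero] at this
    exact this.symm
  set v := sumCone u with hv
  have hsum : ∑ k, ‖(u k).1‖ ≤ ‖v.1‖ := by
    rw [← Finset.sum_congr rfl fun k _ => (hu k).2, ← sumCone_apply]
    exact (le_abs_self _).trans (abs_apply_le_norm _ y₀)
  have hdist : ∀ k, ‖v.1 - (u k).1‖ ≤ ‖v.1‖ - ‖(u k).1‖ := fun k => by
    have e1 : v.1 - (u k).1 = ∑ j ∈ Finset.univ.erase k, (u j).1 := by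
      rw [Finset.sum_erase_eq_sub (Finset.mem_univ k)]
      rfl
    have e2 := norm_sum_le (Finset.univ.erase k) fun j => (u j).1
    rw [← e1, Finset.sum_erase_eq_sub (Finset.mem_univ k)] at e2
    linarith
  have hSv : (S v).1 ≠ 0 := by
    rw [← norm_pos_iff, hnorm]
    have h1 := norm_pos_iff.2 (hu 0).1
    have h2 := hdist 0
    have h3 := norm_nonneg (v.1 - (u 0).1)
    linarith
  obtain ⟨x, hx⟩ := exists_apply_eq_norm (S v).2 hSv
  refine ⟨x, Set.mem_iInter.2 fun k => ?_⟩
  have h1 := hiso (S v) (S (u k))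
  rw [hST, hST] at h1
  have h2 := (le_abs_self _).trans (abs_apply_le_norm ((S v).1 - (S (u k)).1) x)
  rw [ZeroAtInftyContinuousMap.sub_apply, hx, hnorm] at h2
  have h3 := hdist k
  have h4 := (le_abs_self _).trans (abs_apply_le_norm (S (u k)).1 x)
  refine le_antisymm h4 ?_
  rw [hnorm]
  linarith
end

section
/- Let X and Y be locally compact Hausdorff spaces, let T : C₀(X,ℝ)⁺ → C₀(Y,ℝ)⁺ be a bijective isometry with inverse S = T⁻¹, and for y ∈ Y let P_y = {u ∈ C₀(Y,ℝ)⁺ : u ≠ 0 and u(y) = ‖u‖}; for f ∈ C₀(X,ℝ), let M(f) = {x ∈ X : f(x) = ‖f‖}. For each y₀ ∈ Y, the intersection ⋂_{f ∈ S(P_{y₀})} M(f) is non-empty, i.e. there exists x₀ ∈ X with S(u)(x₀) = ‖S(u)‖ for every u ∈ P_{y₀}. -/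
/-!
The inverse `S` is again an isometry, and it fixes `0`: a nonzero `u` in the cone is the midpoint of
`0` and `2u`, which lie at distance `‖u‖` from `u` and `2‖u‖` from each other, whereas two elements
of the cone in the ball of radius `r` about `0` are at distance at most `r` from each other
(`cone_isometry_map_zero`). Hence `S` preserves norms.

For `u, v ∈ P_{y₀}` the sum `u + v` is in `P_{y₀}` with `‖u + v‖ = ‖u‖ + ‖v‖`. At a point where
`S (u + v)` equals `‖u‖ + ‖v‖`, the bound `‖S (u + v) - S u‖ = ‖v‖` forces `S u` to be at least
`‖u‖`, and likewise for `v`. So `M(S(u + v)) ⊆ M(S u) ∩ M(S v)`, and the sets `M(S u)` form a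
directed family of nonempty compact closed sets, whose intersection is nonempty.
-/

open scoped ZeroAtInfty

section ZeroAtInftyNorm

variable {X : Type*} [TopologicalSpace X]

theorem c0_abs_apply_le_norm (f : C₀(X, ℝ)) (x : X) : |f x| ≤ ‖f‖ := by
  rw [← ZeroAtInftyContinuousMap.norm_toBCF_eq_norm]
  exact f.toBCF.norm_coe_le_norm x

theorem c0_norm_le {f : C₀(X, ℝ)} {C : ℝ} (hC : 0 ≤ C) (h : ∀ x, |f x| ≤ C) : ‖f‖ ≤ C := by
  rw [← ZeroAtInftyContinuousMap.norm_toBCF_eq_norm]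
  exact (BoundedContinuousFunction.norm_le hC).2 h

theorem maxSet_isClosed (f : C₀(X, ℝ)) : IsClosed (MaxSet f) :=
  isClosed_eq (map_continuous f) continuous_const

theorem maxSet_isCompact {f : C₀(X, ℝ)} (hf : f ≠ 0) : IsCompact (MaxSet f) := by
  have hpos : 0 < ‖f‖ := norm_pos_iff.2 hf
  have hev : ∀ᶠ x in Filter.cocompact X, f x < ‖f‖ :=
    f.zero_at_infty'.eventually (gt_mem_nhds hpos)
  obtain ⟨K, hK, hsub⟩ := Filter.mem_cocompact.1 hev
  refine hK.of_isClosed_subset (maxSet_isClosed f) fun x hx => ?_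
  by_contra hxK
  exact (ne_of_lt (hsub hxK)) hx

/-- A nonzero nonnegative function vanishing at infinity attains its norm. -/
theorem maxSet_nonempty {f : C₀(X, ℝ)} (hf : f ≠ 0) (hnn : ∀ x, 0 ≤ f x) :
    (MaxSet f).Nonempty := by
  obtain ⟨x₀, hx₀⟩ : ∃ x, f x ≠ 0 := by
    by_contra! h
    exact hf (ZeroAtInftyContinuousMap.ext h)
  have hpos : 0 < f x₀ := lt_of_le_of_ne (hnn x₀) (Ne.symm hx₀)
  have hev : ∀ᶠ x in Filter.cocompact X, f x ≤ f x₀ :=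
    (f.zero_at_infty'.eventually (gt_mem_nhds hpos)).mono fun _ h => le_of_lt h
  obtain ⟨x, hx⟩ := (map_continuous f).exists_forall_ge' x₀ hev
  refine ⟨x, le_antisymm ((le_abs_self _).trans (c0_abs_apply_le_norm f x)) ?_⟩
  refine c0_norm_le (hnn x) fun y => ?_
  rw [abs_of_nonneg (hnn y)]
  exact hx y

end ZeroAtInftyNorm

/-- The sum of two elements of the positive cone. -/
noncomputable def addCone {Y : Type*} [TopologicalSpace Y] (u v : PosCone Y) : PosCone Y :=
  ⟨u.1 + v.1, fun y => add_nonneg (u.2 y) (v.2 y)⟩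

theorem norm_sub_le_of_cone {X : Type*} [TopologicalSpace X] (f g : PosCone X) {r : ℝ}
    (hf : ‖f.1‖ ≤ r) (hg : ‖g.1‖ ≤ r) : ‖f.1 - g.1‖ ≤ r := by
  refine c0_norm_le ((norm_nonneg _).trans hf) fun x => ?_
  have h1 := (abs_le.1 (c0_abs_apply_le_norm f.1 x)).2
  have h2 := (abs_le.1 (c0_abs_apply_le_norm g.1 x)).2
  have h3 := f.2 x
  have h4 := g.2 x
  rw [ZeroAtInftyContinuousMap.coe_sub, Pi.sub_apply, abs_le]
  constructor <;> linarith

/-- A surjective isometry between positive cones fixes `0`: the preimage `u` of `0` is the midpoint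
of `0` and `2u`, whose images would be too far apart for elements of the cone close to `0`. -/
theorem cone_isometry_map_zero {X Y : Type*} [TopologicalSpace X] [TopologicalSpace Y]
    (S : PosCone Y → PosCone X) (hiso : ∀ u v, ‖(S u).1 - (S v).1‖ = ‖u.1 - v.1‖)
    (hsurj : Function.Surjective S) : (S 0).1 = 0 := by
  obtain ⟨u, hu⟩ := hsurj 0
  have hu0 : (S u).1 = 0 := by rw [hu]; rfl
  have h0 : (0 : PosCone Y).1 = 0 := rfl
  have hadd : (addCone u u).1 = u.1 + u.1 := rfl
  have e1 : ‖(S 0).1‖ = ‖u.1‖ := by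
    have := hiso 0 u
    rwa [hu0, h0, sub_zero, zero_sub, norm_neg] at this
  have e2 : ‖(S (addCone u u)).1‖ = ‖u.1‖ := by
    have := hiso (addCone u u) u
    rwa [hu0, hadd, sub_zero, add_sub_cancel_right] at this
  have e3 := norm_sub_le_of_cone (S (addCone u u)) (S 0) e2.le e1.le
  have e4 : ‖u.1 + u.1‖ = 2 * ‖u.1‖ := by
    rw [← two_smul ℝ u.1, norm_smul, Real.norm_ofNat]
  rw [hiso, hadd, h0, sub_zero, e4] at e3
  apply norm_eq_zero.1
  have := norm_nonneg u.1
  linarith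

theorem norm_addCone_of_peak {Y : Type*} [TopologicalSpace Y] {y : Y} {u v : PosCone Y}
    (hu : u ∈ Peak y) (hv : v ∈ Peak y) : ‖(addCone u v).1‖ = ‖u.1‖ + ‖v.1‖ := by
  refine le_antisymm (norm_add_le _ _) ?_
  rw [← hu.2, ← hv.2]
  exact (le_abs_self _).trans (c0_abs_apply_le_norm (addCone u v).1 y)

theorem addCone_mem_peak {Y : Type*} [TopologicalSpace Y] {y : Y} {u v : PosCone Y}
    (hu : u ∈ Peak y) (hv : v ∈ Peak y) : addCone u v ∈ Peak y := by
  have hn := norm_addCone_of_peak hu hv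
  constructor
  · rw [← norm_pos_iff, hn]
    exact add_pos_of_pos_of_nonneg (norm_pos_iff.2 hu.1) (norm_nonneg _)
  · rw [hn, ← hu.2, ← hv.2]
    rfl

theorem peak_nonempty {Y : Type*} [TopologicalSpace Y] [LocallyCompactSpace Y] [T2Space Y]
    (y : Y) : (Peak y).Nonempty := by
  obtain ⟨f, hf1, -, hfc, hf⟩ := exists_continuous_one_zero_of_isCompact
    (isCompact_singleton (x := y)) isClosed_empty (Set.disjoint_empty _)
  have hy : f y = 1 := hf1 (Set.mem_singleton y)
  let g : C₀(Y, ℝ) := ⟨f, hfc.is_zero_at_infty⟩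
  have hgy : g y = 1 := hy
  refine ⟨⟨g, fun x => (hf x).1⟩, ?_, le_antisymm
    ((le_abs_self _).trans (c0_abs_apply_le_norm g y)) ?_⟩
  · intro h
    have h' : g = 0 := h
    rw [h'] at hgy
    exact zero_ne_one hgy
  · change ‖g‖ ≤ g y
    rw [hgy]
    exact c0_norm_le zero_le_one fun x => abs_le.2
      ⟨(neg_nonpos.2 zero_le_one).trans (hf x).1, (hf x).2⟩

/-- If `h` lies within `‖h‖ - ‖f‖` of `f`, then `f` attains its norm wherever `h` attains its own. -/
theorem maxSet_subset_of_norm_sub {X : Type*} [TopologicalSpace X] {f h : C₀(X, ℝ)}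
    (hfh : ‖h - f‖ ≤ ‖h‖ - ‖f‖) : MaxSet h ⊆ MaxSet f := by
  intro x hx
  have hx' : h x = ‖h‖ := hx
  have h1 : h x - f x ≤ ‖h - f‖ := (le_abs_self _).trans (c0_abs_apply_le_norm (h - f) x)
  have h2 := (abs_le.1 (c0_abs_apply_le_norm f x)).2
  change f x = ‖f‖
  linarith

theorem lem_2_7 {X Y : Type*}
    [TopologicalSpace X] [LocallyCompactSpace X] [T2Space X]
    [TopologicalSpace Y] [LocallyCompactSpace Y] [T2Space Y]
    (T : PosCone X → PosCone Y)
    (hiso : ∀ f g : PosCone X,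
      ‖(T f : C₀(Y, ℝ)) - (T g : C₀(Y, ℝ))‖ = ‖(f : C₀(X, ℝ)) - (g : C₀(X, ℝ))‖)
    (hbij : Function.Bijective T)
    (S : PosCone Y → PosCone X)
    (hTS : Function.LeftInverse S T) (hST : Function.RightInverse S T)
    (y₀ : Y) :
    (⋂ f ∈ S '' Peak y₀, MaxSet (f : C₀(X, ℝ))).Nonempty ∧
      ∃ x₀ : X, ∀ u ∈ Peak y₀, (S u : C₀(X, ℝ)) x₀ = ‖(S u : C₀(X, ℝ))‖ := by
  have hisoS : ∀ u v, ‖(S u).1 - (S v).1‖ = ‖u.1 - v.1‖ := fun u v => by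
    rw [← hiso, hST, hST]
  have hS0 := cone_isometry_map_zero S hisoS hTS.surjective
  have hnorm : ∀ u, ‖(S u).1‖ = ‖u.1‖ := fun u => by
    have h := hisoS u 0
    have h0 : (0 : PosCone Y).1 = 0 := rfl
    rwa [hS0, h0, sub_zero, sub_zero] at h
  have hne : ∀ u ∈ Peak y₀, (S u).1 ≠ 0 := fun u hu => by
    rw [← norm_pos_iff, hnorm]
    exact norm_pos_iff.2 hu.1
  have : Nonempty (Peak y₀) := (peak_nonempty y₀).to_subtype
  obtain ⟨x₀, hx₀⟩ := IsCompact.nonempty_iInter_of_directed_nonempty_isCompact_isClosed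
    (fun u : Peak y₀ => MaxSet (S u.1).1)
    (fun u v => by
      have hn := norm_addCone_of_peak u.2 v.2
      refine ⟨⟨addCone u.1 v.1, addCone_mem_peak u.2 v.2⟩, ?_, ?_⟩
      · apply maxSet_subset_of_norm_sub
        rw [hisoS, hnorm, hnorm, hn]
        change ‖u.1.1 + v.1.1 - u.1.1‖ ≤ _
        rw [add_sub_cancel_left, add_sub_cancel_left]
      · apply maxSet_subset_of_norm_sub
        rw [hisoS, hnorm, hnorm, hn]
        change ‖u.1.1 + v.1.1 - v.1.1‖ ≤ _
        rw [add_sub_cancel_right, add_sub_cancel_right])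
    (fun u => maxSet_nonempty (hne u.1 u.2) (S u.1).2)
    (fun u => maxSet_isCompact (hne u.1 u.2))
    (fun u => maxSet_isClosed _)
  have key : ∀ u ∈ Peak y₀, (S u).1 x₀ = ‖(S u).1‖ := fun u hu => Set.mem_iInter.1 hx₀ ⟨u, hu⟩
  refine ⟨⟨x₀, ?_⟩, x₀, key⟩
  simp only [Set.mem_iInter]
  rintro _ ⟨u, hu, rfl⟩
  exact key u hu
end

section
/- Let Y be a locally compact Hausdorff space. For each u ∈ C₀(Y,ℝ)⁺ and each y₀ ∈ Y, there exists a nonzero v ∈ C₀(Y,ℝ)⁺ with v(y₀) = ‖v‖ such that u + v is nonzero and (u + v)(y₀) = ‖u + v‖. -/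
/-!
Write `a = u y₀` and fix `K > ‖u‖`. Take a Urysohn function `w : Y → [0, 1]` with compact support
and `w y₀ = 1`, and set `v = w * (K - max u a)`. The factor `K - max u a` is positive and at most
`K - a`, so `0 ≤ v ≤ K - a = v y₀`. Moreover `u + v ≤ u + (K - max u a) ≤ K = (u + v) y₀`. So both
`v` and `u + v` are nonnegative functions with a positive maximum at `y₀`.
-/

open scoped ZeroAtInfty

lemma apply_eq_norm_of_forall_le {Y : Type*} [TopologicalSpace Y] (f : C₀(Y, ℝ)) (y₀ : Y)
    (h₀ : ∀ x, 0 ≤ f x) (h : ∀ x, f x ≤ f y₀) : f y₀ = ‖f‖ := by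
  rw [← ZeroAtInftyContinuousMap.norm_toBCF_eq_norm]
  apply le_antisymm
  · exact (le_abs_self _).trans (f.toBCF.norm_coe_le_norm y₀)
  · refine (BoundedContinuousFunction.norm_le (h₀ y₀)).2 fun x => ?_
    change |f x| ≤ f y₀
    rw [abs_of_nonneg (h₀ x)]
    exact h x

theorem lem_2_9 {Y : Type*}
    [TopologicalSpace Y] [LocallyCompactSpace Y] [T2Space Y]
    (u : PosCone Y) (y₀ : Y) :
    ∃ v : PosCone Y, (v : C₀(Y, ℝ)) ≠ 0 ∧ (v : C₀(Y, ℝ)) y₀ = ‖(v : C₀(Y, ℝ))‖ ∧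
      (u : C₀(Y, ℝ)) + (v : C₀(Y, ℝ)) ≠ 0 ∧
      ((u : C₀(Y, ℝ)) + (v : C₀(Y, ℝ))) y₀ = ‖(u : C₀(Y, ℝ)) + (v : C₀(Y, ℝ))‖ := by
  obtain ⟨u, hu⟩ := u
  obtain ⟨w, hw1, -, hwc, hw⟩ := exists_continuous_one_zero_of_isCompact
    (isCompact_singleton (x := y₀)) isClosed_empty (Set.disjoint_empty _)
  have hw1 : w y₀ = 1 := hw1 rfl
  obtain ⟨K, hK⟩ : ∃ K : ℝ, ∀ x, u x < K := by
    refine ⟨‖u‖ + 1, fun x => ?_⟩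
    have h : u x ≤ ‖u‖ := (le_abs_self _).trans (u.toBCF.norm_coe_le_norm x)
    linarith
  have hpos : ∀ x, 0 < K - max (u x) (u y₀) := fun x => sub_pos.2 (max_lt (hK x) (hK y₀))
  let v : C₀(Y, ℝ) :=
    { toFun := fun x => w x * (K - max (u x) (u y₀))
      continuous_toFun := by
        have := map_continuous u
        fun_prop
      zero_at_infty' := (hwc.mul_right (f' := fun x => K - max (u x) (u y₀))).is_zero_at_infty }
  have hv : ∀ x, v x = w x * (K - max (u x) (u y₀)) := fun _ => rfl
  have hv₀ : ∀ x, 0 ≤ v x := fun x => mul_nonneg (hw x).1 (hpos x).le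
  have hvle : ∀ x, v x ≤ K - max (u x) (u y₀) := fun x =>
    mul_le_of_le_one_left (hpos x).le (hw x).2
  have hvy : v y₀ = K - u y₀ := by rw [hv, hw1, max_self, one_mul]
  have hvy_pos : 0 < v y₀ := hvy ▸ sub_pos.2 (hK y₀)
  have huv : ∀ x, (u + v) x = u x + v x := fun _ => rfl
  refine ⟨⟨v, hv₀⟩, ?_, ?_, ?_, ?_⟩
  · intro h
    change v = 0 at h
    simp [h] at hvy_pos
  · refine apply_eq_norm_of_forall_le v y₀ hv₀ fun x => ?_
    linarith [hvle x, le_max_right (u x) (u y₀)]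
  · intro h
    change u + v = 0 at h
    have := huv y₀
    rw [h, ZeroAtInftyContinuousMap.zero_apply] at this
    linarith [hu y₀]
  · refine apply_eq_norm_of_forall_le (u + v) y₀ (fun x => add_nonneg (hu x) (hv₀ x)) fun x => ?_
    rw [huv, huv]
    linarith [hvle x, le_max_left (u x) (u y₀)]
end

section
/- Let X and Y be locally compact Hausdorff spaces, let T : C₀(X,ℝ)⁺ → C₀(Y,ℝ)⁺ be a bijective isometry with inverse S = T⁻¹, and suppose φ : Y → X is a map such that S(P_y) = P_{φ(y)} for all y ∈ Y, where for a point p of a locally compact Hausdorff space L, P_p = {h ∈ C₀(L,ℝ)⁺ : h ≠ 0 and h(p) = ‖h‖}. Then T(f)(y) = f(φ(y)) holds for all f ∈ C₀(X,ℝ)⁺ and all y ∈ Y. -/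
/-!
The value of `f` at a point is encoded metrically by the peak set of that point: for `r > 0` and
`r ≥ ‖f‖`, the number `r - f x` is the least distance from `f` to a function in `Peak x` of norm
`r`. The bound `r - f x ≤ ‖f - h‖` comes from evaluating at `x` (`peak_norm_sub_le`), and it is
attained at `h = min r (f + (r - f x) u)` with `u` a Urysohn function at `x` (`exists_peak_near`).

The map `S` is an isometry carrying `Peak y` onto `Peak (φ y)`. Every nonzero positive function
peaks somewhere (`exists_mem_peak`), so `S` sends nonzero functions to nonzero ones; hence `T 0 = 0`
and `T` preserves norms. Comparing the two least distances gives `T f y = f (φ y)`.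
-/

open scoped ZeroAtInfty

section Aux

variable {L : Type*} [TopologicalSpace L]

private lemma apply_le_norm (f : C₀(L, ℝ)) (x : L) : |f x| ≤ ‖f‖ := by
  rw [← ZeroAtInftyContinuousMap.norm_toBCF_eq_norm]
  exact f.toBCF.norm_coe_le_norm x

private lemma norm_le_of_forall {f : C₀(L, ℝ)} {c : ℝ} (hc : 0 ≤ c) (h : ∀ x, |f x| ≤ c) :
    ‖f‖ ≤ c := by
  rw [← ZeroAtInftyContinuousMap.norm_toBCF_eq_norm]
  exact (BoundedContinuousFunction.norm_le hc).2 h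

/-- Lower bound for the distance from `f` to a function peaking at `x`, in terms of `f x`. -/
lemma peak_norm_sub_le (f h : PosCone L) {x : L} (hh : h ∈ Peak x) :
    ‖(h : C₀(L, ℝ))‖ - (f : C₀(L, ℝ)) x ≤ ‖(f : C₀(L, ℝ)) - (h : C₀(L, ℝ))‖ := by
  have h1 := apply_le_norm ((f : C₀(L, ℝ)) - (h : C₀(L, ℝ))) x
  rw [ZeroAtInftyContinuousMap.sub_apply, hh.2] at h1
  linarith [neg_abs_le (f.1 x - ‖h.1‖)]

lemma exists_mem_peak (f : PosCone L) (hf : (f : C₀(L, ℝ)) ≠ 0) : ∃ x, f ∈ Peak x := by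
  obtain ⟨x₀, hx₀⟩ : ∃ x, f.1 x ≠ 0 := by
    by_contra! h
    exact hf (ZeroAtInftyContinuousMap.ext h)
  have hpos : 0 < f.1 x₀ := lt_of_le_of_ne (f.2 x₀) hx₀.symm
  have hev : ∀ᶠ x in Filter.cocompact L, f.1 x ≤ f.1 x₀ :=
    (f.1.zero_at_infty'.eventually (gt_mem_nhds hpos)).mono fun x hx => le_of_lt hx
  obtain ⟨x, hx⟩ := f.1.continuous.exists_forall_ge' x₀ hev
  refine ⟨x, hf, le_antisymm ((le_abs_self _).trans (apply_le_norm _ _)) ?_⟩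
  exact norm_le_of_forall (f.2 x) fun z => by rw [abs_of_nonneg (f.2 z)]; exact hx z

/-- The lower bound of `peak_norm_sub_le` is attained at every norm level `r ≥ ‖f‖`, `r > 0`. -/
lemma exists_peak_near [LocallyCompactSpace L] [T2Space L] (f : PosCone L) (x : L) {r : ℝ}
    (hr : 0 < r) (hfr : ‖(f : C₀(L, ℝ))‖ ≤ r) :
    ∃ h ∈ Peak x, ‖(h : C₀(L, ℝ))‖ = r ∧
      ‖(f : C₀(L, ℝ)) - (h : C₀(L, ℝ))‖ ≤ r - (f : C₀(L, ℝ)) x := by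
  obtain ⟨u, hu1, -, hus, hu⟩ := exists_continuous_one_zero_of_isCompact
    (isCompact_singleton (x := x)) (isClosed_empty (X := L)) (Set.disjoint_empty _)
  have hux : u x = 1 := hu1 rfl
  have hle : ∀ z, f.1 z ≤ r := fun z => (le_abs_self _).trans ((apply_le_norm _ z).trans hfr)
  have hc : 0 ≤ r - f.1 x := sub_nonneg.2 (hle x)
  have hlim : Filter.Tendsto (fun z => min r (f.1 z + (r - f.1 x) * u z))
      (Filter.cocompact L) (nhds 0) := by
    have h1 : Filter.Tendsto (fun z => min r (f.1 z + (r - f.1 x) * u z))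
        (Filter.cocompact L) (nhds (min r (0 + (r - f.1 x) * 0))) :=
      tendsto_const_nhds.min (f.1.zero_at_infty'.add (hus.is_zero_at_infty.const_mul _))
    simpa [hr.le] using h1
  have hcont : Continuous (fun z => min r (f.1 z + (r - f.1 x) * u z)) :=
    continuous_const.min (f.1.continuous.add (continuous_const.mul u.continuous))
  let h : C₀(L, ℝ) := ⟨⟨_, hcont⟩, hlim⟩
  have hh : ∀ z, h z = min r (f.1 z + (r - f.1 x) * u z) := fun z => rfl
  have hfh : ∀ z, f.1 z ≤ h z := fun z => by
    rw [hh]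
    exact le_min (hle z) (by nlinarith [mul_nonneg hc (hu z).1])
  have h0 : ∀ z, 0 ≤ h z := fun z => (f.2 z).trans (hfh z)
  have hx : h x = r := by rw [hh, hux]; simp
  have hn : ‖h‖ = r := by
    refine le_antisymm (norm_le_of_forall hr.le fun z => ?_) ?_
    · rw [abs_of_nonneg (h0 z), hh]
      exact min_le_left _ _
    · rw [← hx]
      exact (le_abs_self _).trans (apply_le_norm h x)
  refine ⟨⟨h, h0⟩, ⟨?_, hx.trans hn.symm⟩, hn, norm_le_of_forall hc fun z => ?_⟩
  · exact norm_pos_iff.1 (hn ▸ hr)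
  · change |f.1 z - h z| ≤ _
    rw [abs_sub_comm, abs_of_nonneg (sub_nonneg.2 (hfh z)), hh]
    have h1 := min_le_right r (f.1 z + (r - f.1 x) * u z)
    nlinarith [mul_le_mul_of_nonneg_left (hu z).2 hc]

end Aux

theorem composition_formula {X Y : Type*}
    [TopologicalSpace X] [LocallyCompactSpace X] [T2Space X]
    [TopologicalSpace Y] [LocallyCompactSpace Y] [T2Space Y]
    (T : PosCone X → PosCone Y)
    (hiso : ∀ f g : PosCone X,
      ‖(T f : C₀(Y, ℝ)) - (T g : C₀(Y, ℝ))‖ = ‖(f : C₀(X, ℝ)) - (g : C₀(X, ℝ))‖)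
    (hbij : Function.Bijective T)
    (S : PosCone Y → PosCone X)
    (hTS : Function.LeftInverse S T) (hST : Function.RightInverse S T)
    (φ : Y → X)
    (hφ : ∀ y : Y, S '' Peak y = Peak (φ y)) :
    ∀ (f : PosCone X) (y : Y), (T f : C₀(Y, ℝ)) y = (f : C₀(X, ℝ)) (φ y) := by
  have hS0 : ∀ k : PosCone Y, k.1 ≠ 0 → (S k).1 ≠ 0 := fun k hk => by
    obtain ⟨y, hy⟩ := exists_mem_peak k hk
    have h1 : S k ∈ Peak (φ y) := hφ y ▸ Set.mem_image_of_mem S hy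
    exact h1.1
  have hT0 : (T 0).1 = 0 := by
    by_contra h
    exact hS0 _ h (by rw [hTS]; rfl)
  have hnorm : ∀ f : PosCone X, ‖(T f).1‖ = ‖f.1‖ := fun f => by
    have h1 := hiso f 0
    rwa [hT0, sub_zero, show ((0 : PosCone X).1) = 0 from rfl, sub_zero] at h1
  intro f y
  -- The summand `1` keeps the common norm level positive when `f = 0`.
  have hr : 0 < ‖f.1‖ + 1 := by positivity
  apply le_antisymm
  · obtain ⟨k, hk, hkr, hd⟩ := exists_peak_near (T f) y hr (by rw [hnorm]; linarith)
    have hSk : S k ∈ Peak (φ y) := hφ y ▸ Set.mem_image_of_mem S hk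
    have h1 := peak_norm_sub_le f (S k) hSk
    rw [← hiso, ← hnorm, hST] at h1
    linarith
  · obtain ⟨h, hh, hhr, hd⟩ := exists_peak_near f (φ y) hr (by linarith)
    obtain ⟨k, hk, rfl⟩ : h ∈ S '' Peak y := hφ y ▸ hh
    have h1 := peak_norm_sub_le (T f) k hk
    rw [← hiso, hST] at hd
    rw [← hnorm, hST] at hhr
    linarith
end
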